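/- arXiv:1604.07945 — 3 statements merged into one kernel-verified Lean document; each statement's English description precedes it below -/
import Mathlib

section
/- Let σ > 1. The function ω ↦ α_{1,ω} is differentiable at every ω = (ω₀,ω₁) ∈ Ω, with partial derivatives ∂_{ω₀} α_{1,ω} = −(ω₁/(σ √ω₀ κ_ω²)) α_{0,ω} − ((ω₁²(2+σ) + 4σω₀)/(2σ ω₀ κ_ω²)) α_{1,ω} and ∂_{ω₁} α_{1,ω} = (2√ω₀/(σ κ_ω²)) α_{0,ω} + (2ω₁(σ+1)/(σ κ_ω²)) α_{1,ω}. -/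
/-!
Put `c = ω₁ / (2√ω₀)`, which lies in `(-1, 1)` for `ω ∈ Ω`, and let
`F p c = ∫₀^∞ (cosh y - c)^p dy` for `p < 0`. The substitution `y = σ κ_ω x` gives
`α_{n,ω} = F (-1/σ - n) c / (σ κ_ω)`, so the claim follows by the chain rule once the derivative of
`F (-1/σ - 1)` is known. Differentiating under the integral sign (`hasDerivAt_coshIntegral`) gives
`∂_c F p = -p F (p - 1)`. With `a = -1/σ`, this produces `F (a - 2)`, which is eliminated by
integrating the derivative of `sinh y (cosh y - c)^(a - 1)` over `(0, ∞)`
(`coshIntegral_recursion`):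
`(1 - a) (1 - c²) F (a - 2) c = -a F a c + (1 - 2a) c F (a - 1) c`.
Finally `1 - c² = κ_ω² / (4 ω₀)`.
-/

open Real MeasureTheory

/-- `κ_ω = √(4ω₀ − ω₁²)` as a function of `ω = (ω₀, ω₁)`. -/
noncomputable def kappa (ω : ℝ × ℝ) : ℝ := Real.sqrt (4 * ω.1 - ω.2 ^ 2)

/-- The integral `α_{n,ω}` as a function of `ω = (ω₀, ω₁)`. -/
noncomputable def alphaP (σ : ℝ) (n : ℕ) (ω : ℝ × ℝ) : ℝ :=
  ∫ x in Set.Ioi (0 : ℝ),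
    (Real.cosh (σ * kappa ω * x) - ω.2 / (2 * Real.sqrt ω.1)) ^ (-(1 / σ) - (n : ℝ))

/-- The integral `F p c = ∫₀^∞ (cosh y - c)^p dy`, convergent for `p < 0` and `c < 1`. -/
noncomputable def coshIntegral (p c : ℝ) : ℝ :=
  ∫ y in Set.Ioi (0 : ℝ), (Real.cosh y - c) ^ p

lemma exp_le_cosh_sub {c d : ℝ} (hcd : c ≤ d) (hd0 : 0 ≤ d) (hd1 : d < 1) (y : ℝ) :
    (1 - d) / 2 * Real.exp y ≤ Real.cosh y - c := by
  have h1 := Real.one_le_cosh y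
  have h2 : Real.exp y / 2 ≤ Real.cosh y := by
    rw [Real.cosh_eq]; linarith [Real.exp_pos (-y)]
  nlinarith

lemma cosh_sub_pos {c : ℝ} (hc : c < 1) (y : ℝ) : 0 < Real.cosh y - c := by
  linarith [Real.one_le_cosh y]

/-- The exponential bound that dominates all integrals below, uniformly in `c ≤ d`. -/
lemma cosh_sub_rpow_le {c d p : ℝ} (hcd : c ≤ d) (hd0 : 0 ≤ d) (hd1 : d < 1) (hp : p ≤ 0)
    (y : ℝ) :
    (Real.cosh y - c) ^ p ≤ ((1 - d) / 2) ^ p * Real.exp (p * y) := by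
  have hpos : 0 < (1 - d) / 2 := by linarith
  have h := Real.rpow_le_rpow_of_nonpos (by positivity) (exp_le_cosh_sub hcd hd0 hd1 y) hp
  rwa [Real.mul_rpow hpos.le (Real.exp_pos y).le, ← Real.exp_mul, mul_comm y p] at h

lemma continuous_cosh_sub_rpow {c : ℝ} (hc : c < 1) (p : ℝ) :
    Continuous fun y : ℝ => (Real.cosh y - c) ^ p :=
  (Real.continuous_cosh.sub continuous_const).rpow_const
    fun y => Or.inl (cosh_sub_pos hc y).ne'

lemma integrable_cosh_sub_rpow {c p : ℝ} (hc : c < 1) (hp : p < 0) :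
    IntegrableOn (fun y : ℝ => (Real.cosh y - c) ^ p) (Set.Ioi 0) := by
  refine Integrable.mono' ((integrableOn_exp_mul_Ioi hp 0).const_mul
    (((1 - max c 0) / 2) ^ p)) (continuous_cosh_sub_rpow hc p).aestronglyMeasurable
    (Filter.Eventually.of_forall fun y => ?_)
  rw [Real.norm_of_nonneg (Real.rpow_nonneg (cosh_sub_pos hc y).le _)]
  exact cosh_sub_rpow_le (le_max_left c 0) (le_max_right c 0) (max_lt hc one_pos) hp.le y

lemma hasDerivAt_coshIntegral {c p : ℝ} (hc : c < 1) (hp : p < 0) :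
    HasDerivAt (coshIntegral p) (-p * coshIntegral (p - 1) c) c := by
  obtain ⟨d, hd, hd1⟩ := exists_between (max_lt hc one_pos)
  obtain ⟨hcd, hd0⟩ := max_lt_iff.1 hd
  have key := (hasDerivAt_integral_of_dominated_loc_of_deriv_le
    (μ := volume.restrict (Set.Ioi (0 : ℝ)))
    (F := fun c y : ℝ => (Real.cosh y - c) ^ p)
    (F' := fun c y : ℝ => -p * (Real.cosh y - c) ^ (p - 1))
    (bound := fun y => -p * (((1 - d) / 2) ^ (p - 1) * Real.exp ((p - 1) * y)))
    (Iio_mem_nhds hcd) ?_ (integrable_cosh_sub_rpow hc hp) ?_ ?_ ?_ ?_).2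
  · rw [integral_const_mul] at key
    exact key
  · filter_upwards [Iio_mem_nhds hc] with x hx
    exact (continuous_cosh_sub_rpow hx p).aestronglyMeasurable
  · exact (continuous_const.mul (continuous_cosh_sub_rpow hc (p - 1))).aestronglyMeasurable
  · refine Filter.Eventually.of_forall fun y x hx => ?_
    have hx1 : x < 1 := lt_trans hx hd1
    rw [norm_mul, Real.norm_of_nonneg (neg_pos.2 hp).le,
      Real.norm_of_nonneg (Real.rpow_nonneg (cosh_sub_pos hx1 y).le _)]
    exact mul_le_mul_of_nonneg_left
      (cosh_sub_rpow_le (le_of_lt hx) hd0.le hd1 (by linarith) y) (neg_pos.2 hp).le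
  · exact ((integrableOn_exp_mul_Ioi (by linarith : p - 1 < 0) 0).const_mul _).const_mul _
  · refine Filter.Eventually.of_forall fun y x hx => ?_
    have hx1 : x < 1 := lt_trans hx hd1
    have h := ((hasDerivAt_id x).const_sub (Real.cosh y)).rpow_const (p := p)
      (Or.inl (cosh_sub_pos hx1 y).ne')
    exact h.congr_deriv (by simp only [id]; ring)

/-- The boundary term of the integration by parts vanishes at infinity. -/
lemma tendsto_sinh_mul_cosh_sub_rpow {c a : ℝ} (hc : c < 1) (ha : a < 0) :
    Filter.Tendsto (fun y : ℝ => Real.sinh y * (Real.cosh y - c) ^ (a - 1)) Filter.atTop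
      (nhds 0) := by
  have hlim : Filter.Tendsto
      (fun y : ℝ => ((1 - max c 0) / 2) ^ (a - 1) * Real.exp (a * y)) Filter.atTop (nhds 0) := by
    have h : Filter.Tendsto (fun y : ℝ => Real.exp (a * y)) Filter.atTop (nhds 0) :=
      Real.tendsto_exp_atBot.comp (Filter.tendsto_id.const_mul_atTop_of_neg ha)
    simpa using h.const_mul (((1 - max c 0) / 2) ^ (a - 1))
  refine squeeze_zero' ?_ ?_ hlim
  · filter_upwards [Filter.eventually_ge_atTop 0] with y hy
    exact mul_nonneg (Real.sinh_nonneg_iff.2 hy) (Real.rpow_nonneg (cosh_sub_pos hc y).le _)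
  · filter_upwards [Filter.eventually_ge_atTop 0] with y hy
    have h1 : Real.sinh y ≤ Real.exp y := by
      rw [Real.sinh_eq]; linarith [Real.exp_pos y, Real.exp_pos (-y)]
    have h2 := cosh_sub_rpow_le (p := a - 1) (le_max_left c 0) (le_max_right c 0)
      (max_lt hc one_pos) (by linarith) y
    calc Real.sinh y * (Real.cosh y - c) ^ (a - 1)
        ≤ Real.exp y * (((1 - max c 0) / 2) ^ (a - 1) * Real.exp ((a - 1) * y)) :=
          mul_le_mul h1 h2 (Real.rpow_nonneg (cosh_sub_pos hc y).le _) (Real.exp_pos y).le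
      _ = ((1 - max c 0) / 2) ^ (a - 1) * Real.exp (a * y) := by
          rw [show a * y = y + (a - 1) * y by ring, Real.exp_add]; ring

/-- Integration of the derivative of `sinh y (cosh y - c)^(a - 1)`, expanded in powers of
`cosh y - c`. -/
lemma coshIntegral_recursion {c a : ℝ} (hc : c < 1) (ha : a < 0) :
    (1 - a) * (1 - c ^ 2) * coshIntegral (a - 1 - 1) c =
      -a * coshIntegral a c + (1 - 2 * a) * c * coshIntegral (a - 1) c := by
  have i0 := (integrable_cosh_sub_rpow hc ha).const_mul a
  have i1 := (integrable_cosh_sub_rpow hc (by linarith : a - 1 < 0)).const_mul ((2 * a - 1) * c)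
  have i2 := (integrable_cosh_sub_rpow hc (by linarith : a - 1 - 1 < 0)).const_mul
    ((1 - a) * (1 - c ^ 2))
  have i01 : Integrable (fun y : ℝ => a * (Real.cosh y - c) ^ a +
      (2 * a - 1) * c * (Real.cosh y - c) ^ (a - 1)) (volume.restrict (Set.Ioi 0)) := i0.add i1
  have i012 : Integrable (fun y : ℝ => a * (Real.cosh y - c) ^ a +
      (2 * a - 1) * c * (Real.cosh y - c) ^ (a - 1) +
      (1 - a) * (1 - c ^ 2) * (Real.cosh y - c) ^ (a - 1 - 1))
      (volume.restrict (Set.Ioi 0)) := i01.add i2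
  have h := integral_Ioi_of_hasDerivAt_of_tendsto' (a := (0 : ℝ))
    (f := fun y : ℝ => Real.sinh y * (Real.cosh y - c) ^ (a - 1))
    (f' := fun y : ℝ => a * (Real.cosh y - c) ^ a +
      (2 * a - 1) * c * (Real.cosh y - c) ^ (a - 1) +
      (1 - a) * (1 - c ^ 2) * (Real.cosh y - c) ^ (a - 1 - 1)) (fun y _ => ?_)
    i012 (tendsto_sinh_mul_cosh_sub_rpow hc ha)
  · rw [integral_add i01 i2, integral_add i0 i1, integral_const_mul,
      integral_const_mul, integral_const_mul] at h
    simp only [Real.sinh_zero, zero_mul, sub_zero] at h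
    simp only [coshIntegral]
    linarith
  · have hu := cosh_sub_pos hc y
    have hd := (Real.hasDerivAt_sinh y).mul
      (((Real.hasDerivAt_cosh y).sub_const c).rpow_const (p := a - 1) (Or.inl hu.ne'))
    have e1 : (Real.cosh y - c) ^ a = (Real.cosh y - c) ^ (a - 1 - 1) * (Real.cosh y - c) ^ 2 := by
      rw [← Real.rpow_natCast, ← Real.rpow_add hu]; congr 1; push_cast; ring
    have e2 : (Real.cosh y - c) ^ (a - 1) =
        (Real.cosh y - c) ^ (a - 1 - 1) * (Real.cosh y - c) := by
      rw [← Real.rpow_add_one hu.ne']; congr 1; ring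
    refine hd.congr_deriv ?_
    rw [e1, e2]
    linear_combination
      (-(a - 1) * (Real.cosh y - c) ^ (a - 1 - 1)) * Real.cosh_sq y

lemma alphaP_eq {σ : ℝ} (hσ : 0 < σ) (n : ℕ) {ω : ℝ × ℝ} (hω : ω.2 ^ 2 < 4 * ω.1) :
    alphaP σ n ω =
      coshIntegral (-(1 / σ) - n) (ω.2 / (2 * Real.sqrt ω.1)) * (σ * kappa ω)⁻¹ := by
  have hk : 0 < kappa ω := Real.sqrt_pos.2 (by linarith)
  have h := integral_comp_mul_left_Ioi
    (fun y : ℝ => (Real.cosh y - ω.2 / (2 * Real.sqrt ω.1)) ^ (-(1 / σ) - (n : ℝ))) 0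
    (mul_pos hσ hk)
  rw [mul_zero, smul_eq_mul] at h
  rw [alphaP, h, coshIntegral, mul_comm]

theorem alpha1_partial_derivatives (σ : ℝ) (hσ : 1 < σ) :
    ∀ ω : ℝ × ℝ, ω.2 ^ 2 < 4 * ω.1 →
      DifferentiableAt ℝ (alphaP σ 1) ω ∧
        fderiv ℝ (alphaP σ 1) ω (1, 0) =
          -(ω.2 / (σ * Real.sqrt ω.1 * (kappa ω) ^ 2)) * alphaP σ 0 ω -
            (ω.2 ^ 2 * (2 + σ) + 4 * σ * ω.1) / (2 * σ * ω.1 * (kappa ω) ^ 2) *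
              alphaP σ 1 ω ∧
        fderiv ℝ (alphaP σ 1) ω (0, 1) =
          2 * Real.sqrt ω.1 / (σ * (kappa ω) ^ 2) * alphaP σ 0 ω +
            2 * ω.2 * (σ + 1) / (σ * (kappa ω) ^ 2) * alphaP σ 1 ω := by
  intro ω hω
  have hσ0 : 0 < σ := by linarith
  have hω0 : 0 < ω.1 := by nlinarith [sq_nonneg ω.2]
  have hD : 0 < 4 * ω.1 - ω.2 ^ 2 := by linarith
  have hr : 0 < Real.sqrt ω.1 := Real.sqrt_pos.2 hω0
  have hr2 : Real.sqrt ω.1 ^ 2 = ω.1 := Real.sq_sqrt hω0.le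
  have hk : 0 < kappa ω := Real.sqrt_pos.2 hD
  have hk2 : kappa ω ^ 2 = 4 * ω.1 - ω.2 ^ 2 := Real.sq_sqrt hD.le
  have hc : ω.2 / (2 * Real.sqrt ω.1) < 1 := by
    rw [div_lt_one (by positivity)]
    nlinarith
  have ha : -(1 / σ) < 0 := neg_neg_of_pos (by positivity)
  have hrec := coshIntegral_recursion hc ha
  have hF := hasDerivAt_coshIntegral hc (by linarith : -(1 / σ) - 1 < 0)
  have d1 : HasFDerivAt (fun ω : ℝ × ℝ => ω.1) (ContinuousLinearMap.fst ℝ ℝ ℝ) ω :=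
    hasFDerivAt_fst
  have d2 : HasFDerivAt (fun ω : ℝ × ℝ => ω.2) (ContinuousLinearMap.snd ℝ ℝ ℝ) ω :=
    hasFDerivAt_snd
  have dk : HasFDerivAt (fun z : ℝ × ℝ => kappa z)
      ((2 / kappa ω) • ContinuousLinearMap.fst ℝ ℝ ℝ -
        (ω.2 / kappa ω) • ContinuousLinearMap.snd ℝ ℝ ℝ) ω := by
    refine (((d1.const_mul 4).sub (d2.pow 2)).sqrt hD.ne').congr_fderiv ?_
    change (1 / (2 * kappa ω)) • _ = _
    ext <;> simp <;> field_simp <;> norm_num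
  have dc : HasFDerivAt (fun z : ℝ × ℝ => z.2 / (2 * Real.sqrt z.1))
      ((1 / (2 * Real.sqrt ω.1)) • ContinuousLinearMap.snd ℝ ℝ ℝ -
        (ω.2 / (4 * Real.sqrt ω.1 ^ 3)) • ContinuousLinearMap.fst ℝ ℝ ℝ) ω := by
    refine (d2.mul ((hasDerivAt_inv (by positivity : 2 * Real.sqrt ω.1 ≠ 0)).comp_hasFDerivAt ω
      ((d1.sqrt hω0.ne').const_mul 2))).congr_fderiv ?_
    ext <;> simp <;> field_simp <;> norm_num
  have dF : HasFDerivAt (fun z : ℝ × ℝ =>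
      coshIntegral (-(1 / σ) - 1) (z.2 / (2 * Real.sqrt z.1))) _ ω :=
    HasDerivAt.comp_hasFDerivAt (f := fun z : ℝ × ℝ => z.2 / (2 * Real.sqrt z.1)) ω hF dc
  have dI : HasFDerivAt (fun z : ℝ × ℝ => (σ * kappa z)⁻¹) _ ω :=
    HasDerivAt.comp_hasFDerivAt (f := fun z : ℝ × ℝ => σ * kappa z) ω
      (hasDerivAt_inv (by positivity : σ * kappa ω ≠ 0)) (dk.const_mul σ)
  have dα := dF.fun_mul dI
  have hev : alphaP σ 1 =ᶠ[nhds ω] fun z : ℝ × ℝ =>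
      coshIntegral (-(1 / σ) - 1) (z.2 / (2 * Real.sqrt z.1)) * (σ * kappa z)⁻¹ := by
    filter_upwards [(isOpen_lt (by fun_prop : Continuous fun z : ℝ × ℝ => z.2 ^ 2)
      (by fun_prop : Continuous fun z : ℝ × ℝ => 4 * z.1)).mem_nhds hω] with z hz
    rw [alphaP_eq hσ0 1 hz, Nat.cast_one]
  have dα' := dα.congr_of_eventuallyEq hev
  rw [dα'.fderiv, alphaP_eq hσ0 0 hω, alphaP_eq hσ0 1 hω, Nat.cast_zero, Nat.cast_one, sub_zero]
  refine ⟨dα'.differentiableAt, ?_⟩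
  -- The derivative of `F (a - 1)` in the form given by the recursion, with `1 - c² = κ²/(4ω₀)`.
  have hF2 : (-(-(1 / σ) - 1)) * coshIntegral (-(1 / σ) - 1 - 1) (ω.2 / (2 * Real.sqrt ω.1)) =
      4 * ω.1 / kappa ω ^ 2 * (1 / σ * coshIntegral (-(1 / σ)) (ω.2 / (2 * Real.sqrt ω.1)) +
        (1 + 2 / σ) * (ω.2 / (2 * Real.sqrt ω.1)) *
          coshIntegral (-(1 / σ) - 1) (ω.2 / (2 * Real.sqrt ω.1))) := by
    have h1 : 1 - (ω.2 / (2 * Real.sqrt ω.1)) ^ 2 = kappa ω ^ 2 / (4 * ω.1) := by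
      rw [hk2, div_pow, mul_pow, hr2]; field_simp; ring
    rw [h1] at hrec
    rw [div_mul_eq_mul_div, eq_div_iff (by positivity)]
    have h2 : kappa ω ^ 2 = kappa ω ^ 2 / (4 * ω.1) * (4 * ω.1) := by field_simp
    rw [h2]
    linear_combination (4 * ω.1) * hrec
  rw [hF2]
  generalize coshIntegral (-(1 / σ)) (ω.2 / (2 * Real.sqrt ω.1)) = A
  generalize coshIntegral (-(1 / σ) - 1) (ω.2 / (2 * Real.sqrt ω.1)) = B
  clear dα' hev dα dI dF dc dk d1 d2 hF hF2 hrec ha hc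
  constructor
  all_goals
    simp [-one_div]
    generalize Real.sqrt ω.1 = r at hr hr2 ⊢
    generalize kappa ω = k at hk ⊢
    rw [← hr2]
    field_simp
    ring
end

section
/- Let 1 < σ < 2 and let a₀, a₁ : Ω → ℝ be differentiable functions satisfying, at every ω = (ω₀,ω₁) ∈ Ω: ∂_{ω₀}a₀ = −(2/κ_ω²)a₀ − (ω₁/(4σω₀^{3/2}))a₁, ∂_{ω₁}a₀ = (ω₁/κ_ω²)a₀ + (1/(2σ√ω₀))a₁, ∂_{ω₀}a₁ = −(ω₁/(σ√ω₀κ_ω²))a₀ − ((ω₁²(2+σ)+4σω₀)/(2σω₀κ_ω²))a₁, and ∂_{ω₁}a₁ = (2√ω₀/(σκ_ω²))a₀ + (2ω₁(σ+1)/(σκ_ω²))a₁. Define G(ω) = 4 κ̃_ω ω₁ (σ−2) ω₀^{1/2} a₀(ω) + 2 κ̃_ω κ_ω² a₁(ω). Then at every ω ∈ Ω, ∂_{ω₁} G(ω) = (4 ω₀^{1/2} κ̃_ω a₀(ω) / (σ κ_ω²)) [ (3σ−2)(σ−2)ω₁² + (σ−1)² κ_ω² ] + (2(3σ−2) ω₁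 κ̃_ω a₁(ω)) / σ. -/
/-!
Write `k = κ_ω² = 4ω₀ - ω₁²`, a smooth positive function on the domain with `∂₁k = -2ω₁`. As `κ̃_ω`
is a function of `ω₀` times `κ_ω ^ (2/σ - 2)`, its logarithmic derivative in `ω₁` is
`2(σ-1)ω₁ / (σ k)` (`hasDerivAt_kappaT_snd`). The product rule along the line `t ↦ (ω₀, t)`, with the
prescribed derivatives of `a₀` and `a₁` in the direction `(0, 1)`, then reduces the claim to an
identity of rational functions in `ω₁`, `σ`, `√ω₀` and `k`. The passage between the Fréchet
derivative of `G` and its derivative along the line uses that `G` is differentiable at `ω`.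
-/


open Real

/-- `κ̃_ω = 2^{1/σ−2} σ⁻¹ (1+σ)^{1/σ} κ_ω^{2/σ−2} ω₀^{−1/(2σ)−1/2}`. -/
noncomputable def kappaT (σ : ℝ) (ω : ℝ × ℝ) : ℝ :=
  (2 : ℝ) ^ (1 / σ - 2) * σ⁻¹ * (1 + σ) ^ (1 / σ) * (kappa ω) ^ (2 / σ - 2) *
    ω.1 ^ (-(1 / (2 * σ)) - 1 / 2)

theorem kappa_pos {ω : ℝ × ℝ} (h : ω.2 ^ 2 < 4 * ω.1) : 0 < kappa ω :=
  Real.sqrt_pos.mpr (by linarith)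

theorem fst_pos {ω : ℝ × ℝ} (h : ω.2 ^ 2 < 4 * ω.1) : 0 < ω.1 := by
  nlinarith [sq_nonneg ω.2]

theorem differentiableAt_kappa {ω : ℝ × ℝ} (h : ω.2 ^ 2 < 4 * ω.1) :
    DifferentiableAt ℝ kappa ω := by
  have h' : 4 * ω.1 - ω.2 ^ 2 ≠ 0 := by linarith
  unfold kappa
  exact DifferentiableAt.sqrt (by fun_prop) h'

theorem differentiableAt_kappaT (σ : ℝ) {ω : ℝ × ℝ} (h : ω.2 ^ 2 < 4 * ω.1) :
    DifferentiableAt ℝ (kappaT σ) ω := by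
  have h1 : DifferentiableAt ℝ (fun x : ℝ × ℝ => kappa x ^ (2 / σ - 2)) ω :=
    (differentiableAt_kappa h).rpow_const (Or.inl (kappa_pos h).ne')
  have h2 : DifferentiableAt ℝ (fun x : ℝ × ℝ => x.1 ^ (-(1 / (2 * σ)) - 1 / 2)) ω :=
    differentiableAt_fst.rpow_const (Or.inl (fst_pos h).ne')
  unfold kappaT
  exact (h1.const_mul _).mul h2

theorem hasDerivAt_kappa_snd {x y : ℝ} (h : y ^ 2 < 4 * x) :
    HasDerivAt (fun t => kappa (x, t)) (-(y / kappa (x, y))) y := by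
  have h' : 4 * x - y ^ 2 ≠ 0 := by linarith
  have h1 : HasDerivAt (fun t : ℝ => 4 * x - t ^ 2) (-(2 * y)) y := by
    simpa using ((hasDerivAt_id y).pow 2).const_sub (4 * x)
  refine (h1.sqrt h').congr_deriv ?_
  have hk : kappa (x, y) ≠ 0 := (kappa_pos (ω := (x, y)) h).ne'
  change -(2 * y) / (2 * kappa (x, y)) = _
  field_simp

theorem hasDerivAt_kappaT_snd {σ x y : ℝ} (hσ : σ ≠ 0) (h : y ^ 2 < 4 * x) :
    HasDerivAt (fun t => kappaT σ (x, t))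
      (2 * (σ - 1) * y / (σ * kappa (x, y) ^ 2) * kappaT σ (x, y)) y := by
  have hk : 0 < kappa (x, y) := kappa_pos (ω := (x, y)) h
  have h1 := (((hasDerivAt_kappa_snd h).rpow_const (p := 2 / σ - 2)
    (Or.inl hk.ne')).const_mul ((2 : ℝ) ^ (1 / σ - 2) * σ⁻¹ * (1 + σ) ^ (1 / σ))).mul_const
    (x ^ (-(1 / (2 * σ)) - 1 / 2))
  refine h1.congr_deriv ?_
  rw [Real.rpow_sub_one hk.ne']
  unfold kappaT
  field_simp
  ring

/-- The derivative along the line `t ↦ (x, t)` is the Fréchet derivative applied to `(0, 1)`. -/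
theorem hasDerivAt_snd_of_differentiableAt {f : ℝ × ℝ → ℝ} {x y : ℝ}
    (hf : DifferentiableAt ℝ f (x, y)) :
    HasDerivAt (fun t => f (x, t)) (fderiv ℝ f (x, y) (0, 1)) y :=
  HasFDerivAt.comp_hasDerivAt (f := fun t : ℝ => (x, t)) y hf.hasFDerivAt
    ((hasDerivAt_const y x).prodMk (hasDerivAt_id y))

theorem partial1_of_G (σ : ℝ) (hσ₁ : 1 < σ) (hσ₂ : σ < 2)
    (a₀ a₁ : ℝ × ℝ → ℝ)
    (hdiff₀ : ∀ ω : ℝ × ℝ, ω.2 ^ 2 < 4 * ω.1 → DifferentiableAt ℝ a₀ ω)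
    (hdiff₁ : ∀ ω : ℝ × ℝ, ω.2 ^ 2 < 4 * ω.1 → DifferentiableAt ℝ a₁ ω)
    (h00 : ∀ ω : ℝ × ℝ, ω.2 ^ 2 < 4 * ω.1 →
      fderiv ℝ a₀ ω (1, 0) =
        -(2 / (kappa ω) ^ 2) * a₀ ω - ω.2 / (4 * σ * ω.1 ^ ((3 : ℝ) / 2)) * a₁ ω)
    (h01 : ∀ ω : ℝ × ℝ, ω.2 ^ 2 < 4 * ω.1 →
      fderiv ℝ a₀ ω (0, 1) =
        ω.2 / (kappa ω) ^ 2 * a₀ ω + 1 / (2 * σ * Real.sqrt ω.1) * a₁ ω)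
    (h10 : ∀ ω : ℝ × ℝ, ω.2 ^ 2 < 4 * ω.1 →
      fderiv ℝ a₁ ω (1, 0) =
        -(ω.2 / (σ * Real.sqrt ω.1 * (kappa ω) ^ 2)) * a₀ ω -
          (ω.2 ^ 2 * (2 + σ) + 4 * σ * ω.1) / (2 * σ * ω.1 * (kappa ω) ^ 2) * a₁ ω)
    (h11 : ∀ ω : ℝ × ℝ, ω.2 ^ 2 < 4 * ω.1 →
      fderiv ℝ a₁ ω (0, 1) =
        2 * Real.sqrt ω.1 / (σ * (kappa ω) ^ 2) * a₀ ω +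
          2 * ω.2 * (σ + 1) / (σ * (kappa ω) ^ 2) * a₁ ω)
    (G : ℝ × ℝ → ℝ)
    (hG : ∀ ω : ℝ × ℝ,
      G ω = 4 * kappaT σ ω * ω.2 * (σ - 2) * Real.sqrt ω.1 * a₀ ω +
        2 * kappaT σ ω * (kappa ω) ^ 2 * a₁ ω) :
    ∀ ω : ℝ × ℝ, ω.2 ^ 2 < 4 * ω.1 →
      fderiv ℝ G ω (0, 1) =
        4 * Real.sqrt ω.1 * kappaT σ ω * a₀ ω / (σ * (kappa ω) ^ 2) *
            ((3 * σ - 2) * (σ - 2) * ω.2 ^ 2 + (σ - 1) ^ 2 * (kappa ω) ^ 2) +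
          2 * (3 * σ - 2) * ω.2 * kappaT σ ω * a₁ ω / σ := by
  rintro ⟨x, y⟩ h
  have hσ : σ ≠ 0 := by linarith
  have hx : 0 < x := fst_pos h
  have hs : 0 < Real.sqrt x := Real.sqrt_pos.mpr hx
  have hk : 0 < kappa (x, y) := kappa_pos h
  have hGd : DifferentiableAt ℝ G (x, y) := by
    have e : G = fun ω => 4 * kappaT σ ω * ω.2 * (σ - 2) * Real.sqrt ω.1 * a₀ ω +
        2 * kappaT σ ω * (kappa ω) ^ 2 * a₁ ω := funext hG
    have d1 := differentiableAt_kappa h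
    have d2 := differentiableAt_kappaT σ h
    have d3 := hdiff₀ _ h
    have d4 := hdiff₁ _ h
    have d5 : DifferentiableAt ℝ (fun ω : ℝ × ℝ => Real.sqrt ω.1) (x, y) :=
      differentiableAt_fst.sqrt hx.ne'
    rw [e]
    fun_prop
  have hG1 := hasDerivAt_snd_of_differentiableAt hGd
  have h0 := hasDerivAt_snd_of_differentiableAt (hdiff₀ _ h)
  have h1 := hasDerivAt_snd_of_differentiableAt (hdiff₁ _ h)
  rw [h01 _ h] at h0
  rw [h11 _ h] at h1
  have hT := hasDerivAt_kappaT_snd hσ h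
  have hK := hasDerivAt_kappa_snd h
  have hG2 := (((((hT.const_mul 4).mul (hasDerivAt_id y)).mul_const (σ - 2)).mul_const
    (Real.sqrt x)).mul h0).add (((hT.const_mul 2).mul (hK.pow 2)).mul h1)
  have e : (fun t => G (x, t)) = _ := funext fun t => hG (x, t)
  rw [e] at hG1
  rw [hG1.unique hG2]
  simp only [Pi.mul_apply, Pi.pow_apply, id]
  field_simp
  ring
end

section
/- Let ω = (ω₀,ω₁) ∈ ℝ² with ω₀ > 0, and let d : ℝ² → ℝ be three times continuously differentiable on a neighborhood U of ω with ∂²_{ω₁} d(ω') = ω₀' ∂²_{ω₀} d(ω') for every ω' = (ω₀',ω₁') ∈ U. Assume ∂_{ω₀}∂_{ω₁} d(ω) = ω₀^{1/2} ∂²_{ω₀} d(ω), and set ξ = (−ω₀ ∂²_{ω₀} d(ω), ∂_{ω₀}∂_{ω₁} d(ω)). Then the third derivative of λ ↦ d(ω + λξ) at λ = 0 equals ω₀² (∂²_{ω₀} d(ω))³ [ −4 ∂_{ω₀}∂²_{ω₁} d(ω) + 4 ω₀^{1/2} ∂²_{ω₀}∂_{ω₁} d(ω) + ∂²_{ω₀}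 d(ω) ]. -/
/-!
By the chain rule the third derivative along `ξ = (ξ₀, ξ₁)` is
`ξ₀³ d₀₀₀ + 3 ξ₀² ξ₁ d₀₀₁ + 3 ξ₀ ξ₁² d₀₁₁ + ξ₁³ d₁₁₁`, where partial derivatives commute by
symmetry of the second derivative (`pd0_pd1_comm`). Differentiating the identity
`d₁₁ = ω₀ d₀₀` in each coordinate gives `d₀₁₁ = d₀₀ + ω₀ d₀₀₀` and `d₁₁₁ = ω₀ d₀₀₁`, which
eliminates `d₀₀₀` and `d₁₁₁`. Substituting `ξ = (-ω₀ d₀₀, √ω₀ d₀₀)` and `√ω₀ ^ 2 = ω₀` leaves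
the claimed expression.
-/

/-- Partial derivative in the first coordinate. -/
noncomputable def pd0 (f : ℝ × ℝ → ℝ) (ω : ℝ × ℝ) : ℝ := fderiv ℝ f ω (1, 0)

/-- Partial derivative in the second coordinate. -/
noncomputable def pd1 (f : ℝ × ℝ → ℝ) (ω : ℝ × ℝ) : ℝ := fderiv ℝ f ω (0, 1)

theorem contDiffOn_pd0 {n : ℕ} {f : ℝ × ℝ → ℝ} {U : Set (ℝ × ℝ)} (hU : IsOpen U)
    (hf : ContDiffOn ℝ (n + 1 : ℕ) f U) : ContDiffOn ℝ n (pd0 f) U :=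
  (hf.fderiv_of_isOpen hU (m := n) (by norm_cast)).clm_apply contDiffOn_const

theorem contDiffOn_pd1 {n : ℕ} {f : ℝ × ℝ → ℝ} {U : Set (ℝ × ℝ)} (hU : IsOpen U)
    (hf : ContDiffOn ℝ (n + 1 : ℕ) f U) : ContDiffOn ℝ n (pd1 f) U :=
  (hf.fderiv_of_isOpen hU (m := n) (by norm_cast)).clm_apply contDiffOn_const

theorem differentiableAt_of_contDiffOn {n : ℕ} {f : ℝ × ℝ → ℝ} {U : Set (ℝ × ℝ)}
    (hU : IsOpen U) (hf : ContDiffOn ℝ (n + 1 : ℕ) f U) {x : ℝ × ℝ} (hx : x ∈ U) :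
    DifferentiableAt ℝ f x :=
  (hf.contDiffAt (hU.mem_nhds hx)).differentiableAt (by norm_cast)

theorem pd0_congr {f g : ℝ × ℝ → ℝ} {U : Set (ℝ × ℝ)} (hU : IsOpen U)
    (h : ∀ y ∈ U, f y = g y) {x : ℝ × ℝ} (hx : x ∈ U) : pd0 f x = pd0 g x := by
  have : f =ᶠ[nhds x] g := Filter.eventuallyEq_of_mem (hU.mem_nhds hx) h
  rw [pd0, pd0, this.fderiv_eq]

theorem pd1_congr {f g : ℝ × ℝ → ℝ} {U : Set (ℝ × ℝ)} (hU : IsOpen U)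
    (h : ∀ y ∈ U, f y = g y) {x : ℝ × ℝ} (hx : x ∈ U) : pd1 f x = pd1 g x := by
  have : f =ᶠ[nhds x] g := Filter.eventuallyEq_of_mem (hU.mem_nhds hx) h
  rw [pd1, pd1, this.fderiv_eq]

/-- Mixed partial derivatives of a `C²` function commute. -/
theorem pd0_pd1_comm {f : ℝ × ℝ → ℝ} {U : Set (ℝ × ℝ)} (hU : IsOpen U)
    (hf : ContDiffOn ℝ (2 : ℕ) f U) {x : ℝ × ℝ} (hx : x ∈ U) :
    pd0 (pd1 f) x = pd1 (pd0 f) x := by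
  have hc : ContDiffAt ℝ (2 : ℕ) f x := hf.contDiffAt (hU.mem_nhds hx)
  have hs : IsSymmSndFDerivAt ℝ f x := hc.isSymmSndFDerivAt (by simp)
  have hd : DifferentiableAt ℝ (fderiv ℝ f) x :=
    ((hf.fderiv_of_isOpen hU (m := 1) (by norm_num)).contDiffAt
      (hU.mem_nhds hx)).differentiableAt (by norm_num)
  have key : ∀ v w : ℝ × ℝ,
      fderiv ℝ (fun y => fderiv ℝ f y v) x w = fderiv ℝ (fderiv ℝ f) x w v := by
    intro v w
    have := (hd.hasFDerivAt.clm_apply (hasFDerivAt_const v x)).fderiv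
    rw [this]
    simp
  exact (key (0, 1) (1, 0)).trans ((hs.eq _ _).trans (key (1, 0) (0, 1)).symm)

theorem pd0_lin (a b : ℝ) {f g : ℝ × ℝ → ℝ} {x : ℝ × ℝ} (hf : DifferentiableAt ℝ f x)
    (hg : DifferentiableAt ℝ g x) :
    pd0 (fun y => a * f y + b * g y) x = a * pd0 f x + b * pd0 g x := by
  have := ((hf.hasFDerivAt.const_mul a).add (hg.hasFDerivAt.const_mul b)).fderiv
  refine (DFunLike.congr_fun this (1, 0)).trans ?_
  simp [pd0]

theorem pd1_lin (a b : ℝ) {f g : ℝ × ℝ → ℝ} {x : ℝ × ℝ} (hf : DifferentiableAt ℝ f x)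
    (hg : DifferentiableAt ℝ g x) :
    pd1 (fun y => a * f y + b * g y) x = a * pd1 f x + b * pd1 g x := by
  have := ((hf.hasFDerivAt.const_mul a).add (hg.hasFDerivAt.const_mul b)).fderiv
  refine (DFunLike.congr_fun this (0, 1)).trans ?_
  simp [pd1]

theorem pd0_fst_mul {f : ℝ × ℝ → ℝ} {x : ℝ × ℝ} (hf : DifferentiableAt ℝ f x) :
    pd0 (fun y => y.1 * f y) x = f x + x.1 * pd0 f x := by
  have := ((hasFDerivAt_fst (𝕜 := ℝ) (p := x)).mul hf.hasFDerivAt).fderiv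
  refine (DFunLike.congr_fun this (1, 0)).trans ?_
  simp [pd0]
  ring

theorem pd1_fst_mul {f : ℝ × ℝ → ℝ} {x : ℝ × ℝ} (hf : DifferentiableAt ℝ f x) :
    pd1 (fun y => y.1 * f y) x = x.1 * pd1 f x := by
  have := ((hasFDerivAt_fst (𝕜 := ℝ) (p := x)).mul hf.hasFDerivAt).fderiv
  refine (DFunLike.congr_fun this (0, 1)).trans ?_
  simp [pd1]

/-- The derivative of a function in the direction `ξ`, expressed by partial derivatives. -/
noncomputable def dirDeriv (ξ : ℝ × ℝ) (f : ℝ × ℝ → ℝ) (x : ℝ × ℝ) : ℝ :=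
  ξ.1 * pd0 f x + ξ.2 * pd1 f x

theorem contDiffOn_dirDeriv (ξ : ℝ × ℝ) {n : ℕ} {f : ℝ × ℝ → ℝ} {U : Set (ℝ × ℝ)}
    (hU : IsOpen U) (hf : ContDiffOn ℝ (n + 1 : ℕ) f U) : ContDiffOn ℝ n (dirDeriv ξ f) U :=
  (contDiffOn_const.mul (contDiffOn_pd0 hU hf)).add
    (contDiffOn_const.mul (contDiffOn_pd1 hU hf))

/-- Chain rule along the line `ω + λ ξ`: one derivative in `λ` at `0` can be traded for one
application of `dirDeriv ξ`. -/
theorem iteratedDeriv_line_succ (ω ξ : ℝ × ℝ) (m : ℕ) {n : ℕ} {f : ℝ × ℝ → ℝ}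
    {U : Set (ℝ × ℝ)} (hU : IsOpen U) (hω : ω ∈ U) (hf : ContDiffOn ℝ (n + 1 : ℕ) f U) :
    iteratedDeriv (m + 1) (fun t : ℝ => f (ω + t • ξ)) 0 =
      iteratedDeriv m (fun t : ℝ => dirDeriv ξ f (ω + t • ξ)) 0 := by
  rw [iteratedDeriv_succ']
  apply Filter.EventuallyEq.iteratedDeriv_eq
  have hc : Continuous fun t : ℝ => ω + t • ξ := by fun_prop
  filter_upwards [(hU.preimage hc).mem_nhds (by simpa using hω : (0 : ℝ) ∈ _)] with t ht
  have hl : HasDerivAt (fun t : ℝ => ω + t • ξ) ξ t := by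
    simpa using ((hasDerivAt_id t).smul_const ξ).const_add ω
  have hfd := (differentiableAt_of_contDiffOn hU hf ht).hasFDerivAt
  refine (hfd.comp_hasDerivAt t hl).deriv.trans ?_
  change fderiv ℝ f (ω + t • ξ) ξ = dirDeriv ξ f (ω + t • ξ)
  generalize ω + t • ξ = y
  have hξ : ξ = ξ.1 • ((1 : ℝ), (0 : ℝ)) + ξ.2 • ((0 : ℝ), (1 : ℝ)) := by ext <;> simp
  exact (congrArg (fderiv ℝ f y) hξ).trans (by rw [map_add, map_smul, map_smul]; rfl)

/-- Third derivative along a line, with the partial derivatives in a fixed order. -/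
theorem iteratedDeriv_three_line (ω ξ : ℝ × ℝ) {d : ℝ × ℝ → ℝ} {U : Set (ℝ × ℝ)}
    (hU : IsOpen U) (hω : ω ∈ U) (hd : ContDiffOn ℝ (3 : ℕ) d U) :
    iteratedDeriv 3 (fun t : ℝ => d (ω + t • ξ)) 0 =
      ξ.1 ^ 3 * pd0 (pd0 (pd0 d)) ω + 3 * ξ.1 ^ 2 * ξ.2 * pd0 (pd0 (pd1 d)) ω +
        3 * ξ.1 * ξ.2 ^ 2 * pd0 (pd1 (pd1 d)) ω + ξ.2 ^ 3 * pd1 (pd1 (pd1 d)) ω := by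
  have h0 := contDiffOn_pd0 (n := 2) hU hd
  have h1 := contDiffOn_pd1 (n := 2) hU hd
  have hD := contDiffOn_dirDeriv ξ (n := 2) hU hd
  have hDD := contDiffOn_dirDeriv ξ (n := 1) hU hD
  have d00 := differentiableAt_of_contDiffOn (n := 0) hU (contDiffOn_pd0 (n := 1) hU h0) hω
  have d01 := differentiableAt_of_contDiffOn (n := 0) hU (contDiffOn_pd0 (n := 1) hU h1) hω
  have d11 := differentiableAt_of_contDiffOn (n := 0) hU (contDiffOn_pd1 (n := 1) hU h1) hω
  have hd2 : ContDiffOn ℝ (2 : ℕ) d U := hd.of_le (by norm_cast)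
  have hsnd : ∀ y ∈ U, dirDeriv ξ (dirDeriv ξ d) y =
      1 * (ξ.1 ^ 2 * pd0 (pd0 d) y + 2 * ξ.1 * ξ.2 * pd0 (pd1 d) y) +
        ξ.2 ^ 2 * pd1 (pd1 d) y := by
    -- The factor `1` puts the sum in the two-term form of `pd0_lin` and `pd1_lin`.
    intro y hy
    have e0 := differentiableAt_of_contDiffOn (n := 1) hU h0 hy
    have e1 := differentiableAt_of_contDiffOn (n := 1) hU h1 hy
    change ξ.1 * pd0 (fun z => ξ.1 * pd0 d z + ξ.2 * pd1 d z) y +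
      ξ.2 * pd1 (fun z => ξ.1 * pd0 d z + ξ.2 * pd1 d z) y = _
    rw [pd0_lin _ _ e0 e1, pd1_lin _ _ e0 e1, ← pd0_pd1_comm hU hd2 hy]
    ring
  have dsum : DifferentiableAt ℝ
      (fun y => ξ.1 ^ 2 * pd0 (pd0 d) y + 2 * ξ.1 * ξ.2 * pd0 (pd1 d) y) ω :=
    (d00.const_mul _).add (d01.const_mul _)
  have c001 : pd1 (pd0 (pd0 d)) ω = pd0 (pd0 (pd1 d)) ω := by
    rw [← pd0_pd1_comm hU h0 hω]
    exact pd0_congr hU (fun y hy => (pd0_pd1_comm hU hd2 hy).symm) hω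
  have c011 : pd1 (pd0 (pd1 d)) ω = pd0 (pd1 (pd1 d)) ω := (pd0_pd1_comm hU h1 hω).symm
  rw [iteratedDeriv_line_succ ω ξ 2 (n := 2) hU hω hd,
    iteratedDeriv_line_succ ω ξ 1 (n := 1) hU hω hD,
    iteratedDeriv_line_succ ω ξ 0 (n := 0) hU hω hDD, iteratedDeriv_zero, zero_smul, add_zero,
    dirDeriv, pd0_congr hU hsnd hω, pd1_congr hU hsnd hω,
    pd0_lin _ _ dsum d11,
    pd1_lin _ _ dsum d11,
    pd0_lin _ _ d00 d01, pd1_lin _ _ d00 d01, c001, c011]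
  ring

theorem third_derivative_along_kernel_direction_case_pos
    (ω : ℝ × ℝ) (hω : 0 < ω.1) (d : ℝ × ℝ → ℝ)
    (U : Set (ℝ × ℝ)) (hU : IsOpen U) (hωU : ω ∈ U)
    (hd : ContDiffOn ℝ 3 d U)
    (hid : ∀ ω' ∈ U, pd1 (pd1 d) ω' = ω'.1 * pd0 (pd0 d) ω')
    (hmix : pd0 (pd1 d) ω = Real.sqrt ω.1 * pd0 (pd0 d) ω)
    (ξ : ℝ × ℝ) (hξ : ξ = (-(ω.1 * pd0 (pd0 d) ω), pd0 (pd1 d) ω)) :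
    iteratedDeriv 3 (fun lam : ℝ => d (ω + lam • ξ)) 0 =
      ω.1 ^ 2 * (pd0 (pd0 d) ω) ^ 3 *
        (-(4 * pd0 (pd1 (pd1 d)) ω) + 4 * Real.sqrt ω.1 * pd0 (pd0 (pd1 d)) ω +
          pd0 (pd0 d) ω) := by
  have h0 := contDiffOn_pd0 (n := 2) hU hd
  have d00 := differentiableAt_of_contDiffOn (n := 0) hU (contDiffOn_pd0 (n := 1) hU h0) hωU
  have hd2 : ContDiffOn ℝ (2 : ℕ) d U := hd.of_le (by norm_cast)
  have c001 : pd1 (pd0 (pd0 d)) ω = pd0 (pd0 (pd1 d)) ω := by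
    rw [← pd0_pd1_comm hU h0 hωU]
    exact pd0_congr hU (fun y hy => (pd0_pd1_comm hU hd2 hy).symm) hωU
  have e0 : pd0 (pd1 (pd1 d)) ω = pd0 (pd0 d) ω + ω.1 * pd0 (pd0 (pd0 d)) ω :=
    (pd0_congr hU hid hωU).trans (pd0_fst_mul d00)
  have e1 : pd1 (pd1 (pd1 d)) ω = ω.1 * pd0 (pd0 (pd1 d)) ω := by
    rw [pd1_congr hU hid hωU, pd1_fst_mul d00, c001]
  have hs : Real.sqrt ω.1 ^ 2 = ω.1 := Real.sq_sqrt hω.le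
  rw [iteratedDeriv_three_line ω ξ hU hωU hd, hξ, hmix, e1, e0]
  dsimp only
  generalize Real.sqrt ω.1 = s at hs ⊢
  rw [← hs]
  ring
end
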